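/- Define ψ : ℝ × ℝ → ℂ by ψ(x, y) = e^{ixy/(4π)} · Σ_{m ∈ ℤ} e^{imx} · e^{-(2πm + y)²/(4π)} (the series over m ∈ ℤ converges absolutely for every (x,y)). Then ψ is even under the reflection P_{++}: ψ(-x, -y) = ψ(x, y) for all x, y ∈ ℝ. (The ground state of the Hall effect on the torus with unit magnetic charge is P_{++}-parity even.) -/

import Mathlib

open Complex

/-- The `m`-th term of the lowest Landau level series: `e^{imx}·e^{-(2πm + y)²/(4π)}`. -/
noncomputable def lllTerm (x y : ℝ) (m : ℤ) : ℂ :=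
  Complex.exp (I * (m : ℂ) * (x : ℂ))
    * (Real.exp (-(2 * Real.pi * (m : ℝ) + y)^2 / (4 * Real.pi)) : ℂ)

/-- The lowest Landau level wavefunction on the torus for unit magnetic charge:
`ψ(x, y) = e^{ixy/(4π)} · Σ_{m ∈ ℤ} e^{imx}·e^{-(2πm + y)²/(4π)}`. -/
noncomputable def lll (x y : ℝ) : ℂ :=
  Complex.exp (I * (x : ℂ) * (y : ℂ) / (4 * (Real.pi : ℂ))) * ∑' m : ℤ, lllTerm x y m

/-!
Expanding the square in the Gaussian and setting `z = (x + iy)/(2π)` turns the series into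
`e^{-y²/(4π)} · θ(z, i)`, and the factor `e^{-y²/(4π)}` combines with the gauge factor
`e^{ixy/(4π)}` into one exponential: `ψ(x, y) = e^{iyz/2} · θ(z, i)`. The reflection sends `(y, z)`
to `(-y, -z)`, so it fixes the product `yz`, and `θ(·, i)` is even.
-/

/-- The complex coordinate `z = (x + iy)/(2π)` on the torus `ℂ / (ℤ + iℤ)`, normalised so that the
lowest Landau level series is a Jacobi theta series in `z` with modulus `τ = i`. -/
noncomputable def torusCoord (x y : ℝ) : ℂ :=
  ((x : ℂ) + I * (y : ℂ)) / (2 * (Real.pi : ℂ))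

theorem torusCoord_neg_neg (x y : ℝ) : torusCoord (-x) (-y) = -torusCoord x y := by
  simp only [torusCoord, ofReal_neg]
  ring

theorem lllTerm_eq_exp_mul_jacobiTheta₂_term (x y : ℝ) (m : ℤ) :
    lllTerm x y m =
      cexp (-(y : ℂ) ^ 2 / (4 * Real.pi)) * jacobiTheta₂_term m (torusCoord x y) I := by
  have hpi : (Real.pi : ℂ) ≠ 0 := ofReal_ne_zero.2 Real.pi_ne_zero
  have hexponent : I * m * x + -(2 * Real.pi * m + y : ℂ) ^ 2 / (4 * Real.pi) =
      -(y : ℂ) ^ 2 / (4 * Real.pi) +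
        (2 * Real.pi * I * m * torusCoord x y + Real.pi * I * m ^ 2 * I) := by
    rw [torusCoord]
    field_simp
    linear_combination (-4 * (Real.pi : ℂ) * m * y - 4 * (Real.pi : ℂ) ^ 2 * m ^ 2) * I_sq
  rw [lllTerm, jacobiTheta₂_term, ofReal_exp, ← Complex.exp_add, ← Complex.exp_add, ← hexponent]
  push_cast
  rfl

theorem summable_lllTerm (x y : ℝ) : Summable (lllTerm x y) := by
  have htheta : Summable fun m : ℤ => jacobiTheta₂_term m (torusCoord x y) I :=
    (summable_jacobiTheta₂_term_iff _ _).2 (I_im ▸ one_pos)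
  exact (htheta.mul_left _).congr fun m => (lllTerm_eq_exp_mul_jacobiTheta₂_term x y m).symm

theorem lll_eq_exp_mul_jacobiTheta₂ (x y : ℝ) :
    lll x y = cexp (I * y * torusCoord x y / 2) * jacobiTheta₂ (torusCoord x y) I := by
  have hexponent : I * (x : ℂ) * y / (4 * Real.pi) + -(y : ℂ) ^ 2 / (4 * Real.pi) =
      I * y * torusCoord x y / 2 := by
    rw [torusCoord]
    linear_combination -(y : ℂ) ^ 2 / (4 * Real.pi) * I_sq
  calc lll x y
      = cexp (I * x * y / (4 * Real.pi)) *
          (cexp (-(y : ℂ) ^ 2 / (4 * Real.pi)) * jacobiTheta₂ (torusCoord x y) I) := by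
        simp only [lll, lllTerm_eq_exp_mul_jacobiTheta₂_term, tsum_mul_left, jacobiTheta₂]
    _ = cexp (I * y * torusCoord x y / 2) * jacobiTheta₂ (torusCoord x y) I := by
        rw [← mul_assoc, ← Complex.exp_add, hexponent]

/-- **The ground state of the Hall effect on the torus with unit magnetic charge is
`P₊₊`-parity even**: the series converges absolutely for every `(x, y)`, and
`ψ(-x, -y) = ψ(x, y)` for all `x, y`. -/
theorem lll_parity_even :
    (∀ x y : ℝ, Summable fun m : ℤ => ‖lllTerm x y m‖) ∧
    (∀ x y : ℝ, lll (-x) (-y) = lll x y) := by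
  refine ⟨fun x y => (summable_lllTerm x y).norm, fun x y => ?_⟩
  calc lll (-x) (-y)
      = cexp (I * (-y : ℝ) * -torusCoord x y / 2) * jacobiTheta₂ (-torusCoord x y) I := by
        rw [lll_eq_exp_mul_jacobiTheta₂, torusCoord_neg_neg]
    _ = cexp (I * y * torusCoord x y / 2) * jacobiTheta₂ (torusCoord x y) I := by
        rw [jacobiTheta₂_neg_left, ofReal_neg, mul_neg I, neg_mul_neg]
    _ = lll x y := (lll_eq_exp_mul_jacobiTheta₂ x y).symm
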